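/- arXiv:2004.06712 — 2 statements merged into one kernel-verified Lean document; each statement's English description precedes it below -/
import Mathlib

section
/- Let (Ω, 𝒜, μ) be a σ-finite measure space, X a Banach space, and M_n : X → L⁰(μ) a sequence of linear maps that is uniformly equicontinuous in measure at zero in X: for every ε > 0 and δ > 0 there exists γ > 0 such that for every x ∈ X with ‖x‖ < γ there is a measurable set E ⊆ Ω with μ(Ω∖E) ≤ ε and sup_n ‖(M_n(x))·1_E‖_∞ ≤ δ. Then the set { x ∈ X : (M_n(x))_{n≥1} converges almost uniformly } is closed in X. -/
open MeasureTheory Filter Set ENNReal Topology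

variable {Ω : Type*} [MeasurableSpace Ω]

/-- Almost uniform convergence of a net `F` to `f`. -/
def AuTendsto {ι : Type*} (μ : Measure Ω) (l : Filter ι) (F : ι → Ω →ₘ[μ] ℝ)
    (f : Ω →ₘ[μ] ℝ) : Prop :=
  ∀ ε : ℝ, 0 < ε → ∃ E : Set Ω, MeasurableSet E ∧ μ Eᶜ ≤ ENNReal.ofReal ε ∧
    Tendsto (fun i => eLpNorm (E.indicator (⇑(F i - f))) ⊤ μ) l (𝓝 0)

/-!
Almost uniform convergence satisfies a Cauchy criterion: choosing a sequence of indices along which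
the exceptional sets and the tolerances are summable, the Borel–Cantelli lemma gives an almost
everywhere limit along it, and the tails of the exceptional sets make the convergence of the whole
net almost uniform. The Cauchy condition survives approximation up to arbitrarily small errors off
arbitrarily small sets, and equicontinuity at zero says that `M_n y` approximates `M_n x` in this
sense, uniformly in `n`, as `y` tends to `x`.
-/

theorem exists_measure_compl_iInter_add_le {μ : Measure Ω} {E : ℕ → Set Ω}
    (hE : ∑' k, μ (E k)ᶜ ≠ ∞) {ε : ℝ≥0∞} (hε : 0 < ε) : ∃ K, μ (⋂ k, E (k + K))ᶜ ≤ ε := by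
  obtain ⟨K, hK⟩ := ((ENNReal.tendsto_sum_nat_add _ hE).eventually_le_const hε).exists
  refine ⟨K, ?_⟩
  rw [compl_iInter]
  exact (measure_iUnion_le _).trans hK

theorem eLpNorm_top_indicator_coeFn_sub_le_iff {μ : Measure Ω} {β : Type*} [NormedAddCommGroup β]
    {E : Set Ω} {f g : Ω →ₘ[μ] β} {c : ℝ≥0∞} :
    eLpNorm (E.indicator ⇑(f - g)) ⊤ μ ≤ c ↔ ∀ᵐ ω ∂μ, ω ∈ E → edist (f ω) (g ω) ≤ c := by
  have essSup_le_iff : eLpNorm (E.indicator ⇑(f - g)) ⊤ μ ≤ c ↔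
      ∀ᵐ ω ∂μ, ‖E.indicator ⇑(f - g) ω‖ₑ ≤ c := by
    rw [eLpNorm_exponent_top]
    exact ⟨fun h => ae_le_eLpNormEssSup.mono fun _ hω => hω.trans h,
      eLpNormEssSup_le_of_ae_enorm_bound⟩
  rw [essSup_le_iff]
  refine eventually_congr ?_
  filter_upwards [AEEqFun.coeFn_sub f g] with ω hω
  by_cases hωE : ω ∈ E
  · simp only [indicator_of_mem hωE, hω, Pi.sub_apply, edist_eq_enorm_sub, hωE, forall_const]
  · simp only [indicator_of_notMem hωE, enorm_zero, zero_le, hωE, false_imp_iff]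

theorem exists_ae_tendsto_of_tsum_ne_top {μ : Measure Ω} {β : Type*} [PseudoEMetricSpace β]
    [CompleteSpace β] {g : ℕ → Ω →ₘ[μ] β} {E : ℕ → Set Ω} {b : ℕ → ℝ≥0∞} (hb : ∑' k, b k ≠ ∞)
    (hE : ∀ k, μ (E k)ᶜ ≤ b k)
    (hg : ∀ k, ∀ m ≥ k, ∀ n ≥ k, ∀ᵐ ω ∂μ, ω ∈ E k → edist (g m ω) (g n ω) ≤ b k) :
    ∃ f : Ω →ₘ[μ] β, ∀ᵐ ω ∂μ, Tendsto (fun n => g n ω) atTop (𝓝 (f ω)) := by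
  have hbound : ∀ᵐ ω ∂μ, ∀ k, ∀ m ≥ k, ∀ n ≥ k, ω ∈ E k → edist (g m ω) (g n ω) ≤ b k := by
    simpa only [ae_all_iff] using hg
  have hmem : ∀ᵐ ω ∂μ, ∀ᶠ k in atTop, ω ∉ (E k)ᶜ :=
    ae_eventually_notMem (ne_top_of_le_ne_top hb (ENNReal.tsum_le_tsum hE))
  have hconv : ∀ᵐ ω ∂μ, ∃ y, Tendsto (fun n => g n ω) atTop (𝓝 y) := by
    filter_upwards [hbound, hmem] with ω hω hωE
    refine cauchySeq_tendsto_of_complete (EMetric.cauchySeq_iff.2 fun δ hδ => ?_)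
    have hsmall := (ENNReal.tendsto_atTop_zero_of_tsum_ne_top hb).eventually_lt_const hδ
    obtain ⟨k, hkδ, hkE⟩ := (hsmall.and hωE).exists
    exact ⟨k, fun m hm n hn => (hω k m hm n hn (notMem_compl_iff.1 hkE)).trans_lt hkδ⟩
  obtain ⟨f, hf, hlim⟩ :=
    exists_stronglyMeasurable_limit_of_tendsto_ae (fun n => (g n).aestronglyMeasurable) hconv
  refine ⟨AEEqFun.mk f hf.aestronglyMeasurable, ?_⟩
  filter_upwards [hlim, AEEqFun.coeFn_mk f hf.aestronglyMeasurable] with ω hω hfω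
  rwa [hfω]

section AlmostUniform

variable {μ : Measure Ω} {ι : Type*} {l : Filter ι} {F : ι → Ω →ₘ[μ] ℝ}

theorem AuTendsto.of_tsum_ne_top {f : Ω →ₘ[μ] ℝ} {E : ℕ → Set Ω} {b : ℕ → ℝ≥0∞}
    (hb : ∑' k, b k ≠ ∞) (hEm : ∀ k, MeasurableSet (E k)) (hE : ∀ k, μ (E k)ᶜ ≤ b k)
    (hF : ∀ k, ∀ᶠ i in l, eLpNorm ((E k).indicator ⇑(F i - f)) ⊤ μ ≤ b k) :
    AuTendsto μ l F f := by
  intro ε hε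
  obtain ⟨K, hK⟩ := exists_measure_compl_iInter_add_le
    (ne_top_of_le_ne_top hb (ENNReal.tsum_le_tsum hE)) (ENNReal.ofReal_pos.2 hε)
  refine ⟨_, .iInter fun k => hEm (k + K), hK, ENNReal.tendsto_nhds_zero.2 fun δ hδ => ?_⟩
  have hb_tail : Tendsto (fun k => b (k + K)) atTop (𝓝 0) :=
    (tendsto_add_atTop_iff_nat K).2 (ENNReal.tendsto_atTop_zero_of_tsum_ne_top hb)
  obtain ⟨k, hk⟩ := (hb_tail.eventually_le_const hδ).exists
  filter_upwards [hF (k + K)] with i hi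
  have hsub : (⋂ k, E (k + K)) ⊆ E (k + K) := iInter_subset _ k
  rw [eLpNorm_top_indicator_coeFn_sub_le_iff] at hi ⊢
  exact hi.mono fun ω hω hωE => (hω (hsub hωE)).trans hk

/-- The Cauchy condition for almost uniform convergence of a net. The exceptional set may depend on
the tolerance, and one `ε` serves both as the tolerance and as the bound on the measure of that
set; `exists_auTendsto_iff_auCauchy` shows that nothing is lost. -/
def AuCauchy (μ : Measure Ω) (l : Filter ι) (F : ι → Ω →ₘ[μ] ℝ) : Prop :=
  ∀ ε : ℝ, 0 < ε → ∃ E : Set Ω, MeasurableSet E ∧ μ Eᶜ ≤ ENNReal.ofReal ε ∧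
    ∀ᶠ p in l ×ˢ l, eLpNorm (E.indicator ⇑(F p.1 - F p.2)) ⊤ μ ≤ ENNReal.ofReal ε

theorem AuTendsto.auCauchy {f : Ω →ₘ[μ] ℝ} (hF : AuTendsto μ l F f) : AuCauchy μ l F := by
  intro ε hε
  obtain ⟨E, hEm, hE, hlim⟩ := hF ε hε
  have hclose := ENNReal.tendsto_nhds_zero.1 hlim (ENNReal.ofReal ε / 2) (by simpa using hε)
  refine ⟨E, hEm, hE, ?_⟩
  filter_upwards [hclose.prod_mk hclose] with ⟨i, j⟩ ⟨hi, hj⟩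
  rw [eLpNorm_top_indicator_coeFn_sub_le_iff] at hi hj ⊢
  filter_upwards [hi, hj] with ω hiω hjω hωE
  calc edist (F i ω) (F j ω)
      ≤ edist (F i ω) (f ω) + edist (F j ω) (f ω) := edist_triangle_right _ _ _
    _ ≤ ENNReal.ofReal ε / 2 + ENNReal.ofReal ε / 2 := add_le_add (hiω hωE) (hjω hωE)
    _ = ENNReal.ofReal ε := ENNReal.add_halves _

theorem AuCauchy.exists_auTendsto [l.NeBot] (hF : AuCauchy μ l F) :
    ∃ f : Ω →ₘ[μ] ℝ, AuTendsto μ l F f := by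
  choose E hEm hE hFE using fun k : ℕ => hF ((1 / 2) ^ k) (by positivity)
  simp only [eventually_prod_self_iff', eLpNorm_top_indicator_coeFn_sub_le_iff] at hFE
  choose S hSl hS using hFE
  have hb : ∑' k : ℕ, ENNReal.ofReal ((1 / 2) ^ k) ≠ ∞ := summable_geometric_two.tsum_ofReal_ne_top
  have hnonempty : ∀ k, ∃ i, ∀ j ≤ k, i ∈ S j := fun k =>
    ((eventually_all_finite (finite_Iic k)).2 fun j _ => hSl j).exists
  choose u hu using hnonempty
  obtain ⟨f, hf⟩ := exists_ae_tendsto_of_tsum_ne_top hb hE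
    fun k m hm n hn => hS k (u m) (hu m k hm) (u n) (hu n k hn)
  refine ⟨f, .of_tsum_ne_top hb hEm hE fun k => mem_of_superset (hSl k) fun i hi =>
    eLpNorm_top_indicator_coeFn_sub_le_iff.2 ?_⟩
  have hclose : ∀ᵐ ω ∂μ, ∀ n ≥ k, ω ∈ E k →
      edist (F i ω) (F (u n) ω) ≤ ENNReal.ofReal ((1 / 2) ^ k) := by
    simpa only [ae_all_iff] using fun n hn => hS k i hi (u n) (hu n k hn)
  filter_upwards [hclose, hf] with ω hω hlim hωE
  exact le_of_tendsto (tendsto_const_nhds.edist hlim)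
    ((eventually_ge_atTop k).mono fun n hn => hω n hn hωE)

theorem exists_auTendsto_iff_auCauchy [l.NeBot] :
    (∃ f : Ω →ₘ[μ] ℝ, AuTendsto μ l F f) ↔ AuCauchy μ l F :=
  ⟨fun ⟨_, hf⟩ => hf.auCauchy, AuCauchy.exists_auTendsto⟩

theorem AuCauchy.of_forall_approx
    (h : ∀ ε : ℝ, 0 < ε → ∃ G : ι → Ω →ₘ[μ] ℝ, AuCauchy μ l G ∧
      ∃ E : Set Ω, MeasurableSet E ∧ μ Eᶜ ≤ ENNReal.ofReal ε ∧
        ∀ᶠ i in l, eLpNorm (E.indicator ⇑(F i - G i)) ⊤ μ ≤ ENNReal.ofReal ε) :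
    AuCauchy μ l F := by
  intro ε hε
  have hε3 : 0 < ε / 3 := by positivity
  have hthirds : ENNReal.ofReal (ε / 3) + ENNReal.ofReal (ε / 3) + ENNReal.ofReal (ε / 3) =
      ENNReal.ofReal ε := by
    rw [← ENNReal.ofReal_add hε3.le hε3.le, ← ENNReal.ofReal_add (by positivity) hε3.le]
    ring_nf
  obtain ⟨G, hG, E, hEm, hE, hFG⟩ := h (ε / 3) hε3
  obtain ⟨A, hAm, hA, hGA⟩ := hG (ε / 3) hε3
  refine ⟨E ∩ A, hEm.inter hAm, ?_, ?_⟩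
  · calc μ (E ∩ A)ᶜ
        ≤ μ Eᶜ + μ Aᶜ := by rw [compl_inter]; exact measure_union_le _ _
      _ ≤ ENNReal.ofReal (ε / 3) + ENNReal.ofReal (ε / 3) := add_le_add hE hA
      _ ≤ ENNReal.ofReal ε := hthirds ▸ le_self_add
  · filter_upwards [hFG.prod_mk hFG, hGA] with ⟨i, j⟩ ⟨hi, hj⟩ hij
    rw [eLpNorm_top_indicator_coeFn_sub_le_iff] at hi hj hij ⊢
    filter_upwards [hi, hj, hij] with ω hiω hjω hijω ⟨hωE, hωA⟩
    calc edist (F i ω) (F j ω)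
        ≤ edist (F i ω) (G i ω) + edist (G i ω) (G j ω) + edist (G j ω) (F j ω) :=
          edist_triangle4 _ _ _ _
      _ ≤ ENNReal.ofReal (ε / 3) + ENNReal.ofReal (ε / 3) + ENNReal.ofReal (ε / 3) := by
          rw [edist_comm (G j ω)]
          exact add_le_add_three (hiω hωE) (hijω hωA) (hjω hωE)
      _ = ENNReal.ofReal ε := hthirds

theorem au_convergence_set_closed_general [l.NeBot] {X : Type*} [AddGroup X] [TopologicalSpace X]
    [IsTopologicalAddGroup X] (M : ι → X →+ (Ω →ₘ[μ] ℝ))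
    (huem : ∀ ε : ℝ, 0 < ε → ∀ δ : ℝ, 0 < δ → ∀ᶠ x in 𝓝 (0 : X),
      ∃ E : Set Ω, MeasurableSet E ∧ μ Eᶜ ≤ ENNReal.ofReal ε ∧
        ∀ i, eLpNorm (E.indicator ⇑(M i x)) ⊤ μ ≤ ENNReal.ofReal δ) :
    IsClosed {x : X | ∃ f : Ω →ₘ[μ] ℝ, AuTendsto μ l (fun i => M i x) f} := by
  simp only [exists_auTendsto_iff_auCauchy]
  refine isClosed_iff_frequently.2 fun x hx => ?_
  rw [mem_ofPred_eq]
  refine .of_forall_approx fun ε hε => ?_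
  have hsub : Tendsto (fun y => x - y) (𝓝 x) (𝓝 0) :=
    (continuous_sub_left x).tendsto' x 0 (sub_self x)
  obtain ⟨y, hy, E, hEm, hE, hxy⟩ :=
    (hx.and_eventually (hsub.eventually (huem ε hε ε hε))).exists
  simp only [map_sub] at hxy
  exact ⟨fun i => M i y, hy, E, hEm, hE, .of_forall hxy⟩

end AlmostUniform

/-- **Commutative case of Proposition 3.5**: if a sequence of linear maps
`M_n : X → L⁰(μ)` is uniformly equicontinuous in measure at zero in `X`, then the set of
`x ∈ X` for which `(M_n(x))` converges almost uniformly is closed in `X`. -/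
theorem au_convergence_set_closed (μ : Measure Ω) [SigmaFinite μ]
    {X : Type*} [NormedAddCommGroup X] [NormedSpace ℝ X] [CompleteSpace X]
    (M : ℕ → X →ₗ[ℝ] (Ω →ₘ[μ] ℝ))
    (huem : ∀ ε : ℝ, 0 < ε → ∀ δ : ℝ, 0 < δ → ∃ γ : ℝ, 0 < γ ∧
      ∀ x : X, ‖x‖ < γ → ∃ E : Set Ω, MeasurableSet E ∧ μ Eᶜ ≤ ENNReal.ofReal ε ∧
        ∀ n : ℕ, eLpNorm (E.indicator ⇑(M n x)) ⊤ μ ≤ ENNReal.ofReal δ) :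
    IsClosed {x : X | ∃ f : Ω →ₘ[μ] ℝ, AuTendsto μ atTop (fun n => M n x) f} :=
  au_convergence_set_closed_general (fun n => (M n).toAddMonoidHom) fun ε hε δ hδ =>
    Metric.eventually_nhds_iff.2 (by simpa using huem ε hε δ hδ)
end

section
/- Let (Ω, 𝒜, μ) be a σ-finite measure space and T a positive Dunford–Schwartz operator. Then for every f ∈ R_μ the Cesàro averages A_n(f) = (1/n) ∑_{k=0}^{n−1} T^k f converge almost uniformly to some function f̂ ∈ R_μ. -/
/-!
For `f ∈ R_μ` and `lam > 0` one can write `f = u + b` with `u ∈ L¹` and `‖b‖_∞ ≤ lam`, so Hopf's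
maximal inequality for `u` bounds the measure of the set where `sup_n |A_n f|` exceeds `2 * lam` by
a multiple of the `L¹`-norm of the excess of `|f|` over `lam`. It therefore suffices to approximate
`f`, as measured by the excess at each level, by functions whose averages converge uniformly.

By Kadison's inequality `(T f)² ≤ T (f²)`, `T` contracts `L²`, where von Neumann's theorem and the
density of `L² ∩ L^∞` provide approximants `p + (w - T w)` with `T p = p` and `w` bounded; their
averages are `p + (w - T^n w) / n`. An `L²`-approximation is also one in excess, because
`4 * lam * (|f| - lam) ≤ |f|²`, and `L¹ ∩ L²` is dense in `L¹`. The limit stays in `R_μ` by Fatou's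
lemma, since the averages do not increase the excess.
-/

open MeasureTheory Filter Set ENNReal Topology

variable {Ω : Type*} [MeasurableSpace Ω]

/-- `f` belongs to `L¹(μ) + L^∞(μ)`. -/
def MemL1pLinf (μ : Measure Ω) (f : Ω →ₘ[μ] ℝ) : Prop :=
  ∃ g h : Ω →ₘ[μ] ℝ, eLpNorm g 1 μ ≠ ∞ ∧ eLpNorm h ⊤ μ ≠ ∞ ∧ f = g + h

/-- A positive Dunford–Schwartz operator: linear and positive on `L¹+L^∞`,
contracting both the `L¹`- and `L^∞`-norms. -/
structure IsPosDS (μ : Measure Ω) (T : (Ω →ₘ[μ] ℝ) → (Ω →ₘ[μ] ℝ)) : Prop where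
  map_add : ∀ f g, MemL1pLinf μ f → MemL1pLinf μ g → T (f + g) = T f + T g
  map_smul : ∀ (c : ℝ) (f), MemL1pLinf μ f → T (c • f) = c • T f
  map_pos : ∀ f, MemL1pLinf μ f → 0 ≤ f → 0 ≤ T f
  norm_one : ∀ f, MemL1pLinf μ f → eLpNorm (T f) 1 μ ≤ eLpNorm f 1 μ
  norm_top : ∀ f, MemL1pLinf μ f → eLpNorm (T f) ⊤ μ ≤ eLpNorm f ⊤ μ

/-- The Cesàro averages `A_n(f) = (1/n) ∑_{k<n} T^k f`. -/
noncomputable def cesaro (μ : Measure Ω) (T : (Ω →ₘ[μ] ℝ) → (Ω →ₘ[μ] ℝ)) (n : ℕ)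
    (f : Ω →ₘ[μ] ℝ) : Ω →ₘ[μ] ℝ :=
  (n : ℝ)⁻¹ • ∑ k ∈ Finset.range n, T^[k] f

/-- `R_μ`: elements of `L¹+L^∞` whose distribution tails are finite. -/
def MemRmu (μ : Measure Ω) (f : Ω →ₘ[μ] ℝ) : Prop :=
  MemL1pLinf μ f ∧ ∀ lam : ℝ, 0 < lam → μ {ω | lam < |f ω|} < ∞

section L1pLinf

variable {μ : Measure Ω} {f g : Ω →ₘ[μ] ℝ}

theorem eLpNorm_coeFn_add_le {p : ℝ≥0∞} (hp : 1 ≤ p) :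
    eLpNorm ↑(f + g) p μ ≤ eLpNorm f p μ + eLpNorm g p μ :=
  (eLpNorm_congr_ae (AEEqFun.coeFn_add f g)).trans_le
    (eLpNorm_add_le f.aestronglyMeasurable g.aestronglyMeasurable hp)

theorem eLpNorm_coeFn_smul (c : ℝ) (f : Ω →ₘ[μ] ℝ) (p : ℝ≥0∞) :
    eLpNorm ↑(c • f) p μ = ‖c‖ₑ * eLpNorm f p μ :=
  (eLpNorm_congr_ae (AEEqFun.coeFn_smul c f)).trans (eLpNorm_const_smul c f p μ)

theorem eLpNorm_coeFn_zero (p : ℝ≥0∞) : eLpNorm ↑(0 : Ω →ₘ[μ] ℝ) p μ = 0 :=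
  (eLpNorm_congr_ae AEEqFun.coeFn_zero).trans eLpNorm_zero

theorem eLpNorm_coeFn_sum_le {ι : Type*} (s : Finset ι) (F : ι → Ω →ₘ[μ] ℝ) {p : ℝ≥0∞}
    (hp : 1 ≤ p) : eLpNorm ↑(∑ i ∈ s, F i) p μ ≤ ∑ i ∈ s, eLpNorm (F i) p μ :=
  Finset.le_sum_of_subadditive (fun f : Ω →ₘ[μ] ℝ ↦ eLpNorm f p μ) (eLpNorm_coeFn_zero p).le
    (fun _ _ ↦ eLpNorm_coeFn_add_le hp) s F

theorem eLpNorm_top_le_ofReal_iff {f : Ω → ℝ} {C : ℝ} (hC : 0 ≤ C) :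
    eLpNorm f ∞ μ ≤ ENNReal.ofReal C ↔ ∀ᵐ ω ∂μ, |f ω| ≤ C := by
  refine ⟨fun h ↦ ?_, fun h ↦ eLpNormEssSup_le_of_ae_bound h⟩
  filter_upwards [ae_le_eLpNormEssSup (f := f) (μ := μ)] with ω hω
  rw [← Real.norm_eq_abs, ← ENNReal.ofReal_le_ofReal_iff hC, ofReal_norm]
  exact hω.trans h

theorem coeFn_nonneg_iff : 0 ≤ f ↔ ∀ᵐ ω ∂μ, 0 ≤ f ω := by
  rw [← AEEqFun.coeFn_le]
  refine eventually_congr ?_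
  filter_upwards [AEEqFun.coeFn_zero (μ := μ) (α := Ω) (β := ℝ)] with ω hω
  simp [hω]

theorem memL1pLinf_iff_mem_sup :
    MemL1pLinf μ f ↔ f ∈ Lp.LpSubmodule ℝ ℝ 1 μ ⊔ Lp.LpSubmodule ℝ ℝ ∞ μ := by
  simp only [Submodule.mem_sup, MemL1pLinf, ← lt_top_iff_ne_top]
  constructor
  · rintro ⟨u, b, hu, hb, rfl⟩
    exact ⟨u, hu, b, hb, rfl⟩
  · rintro ⟨u, hu, b, hb, rfl⟩
    exact ⟨u, b, hu, hb, rfl⟩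

theorem memL1pLinf_of_eLpNorm_one_ne_top (hf : eLpNorm f 1 μ ≠ ∞) : MemL1pLinf μ f :=
  memL1pLinf_iff_mem_sup.2 (Submodule.mem_sup_left hf.lt_top)

theorem memL1pLinf_coe_Lp_one (x : Lp ℝ 1 μ) : MemL1pLinf μ x.1 :=
  memL1pLinf_of_eLpNorm_one_ne_top (Lp.eLpNorm_ne_top x)

theorem memL1pLinf_of_eLpNorm_top_ne_top (hf : eLpNorm f ∞ μ ≠ ∞) : MemL1pLinf μ f :=
  memL1pLinf_iff_mem_sup.2 (Submodule.mem_sup_right hf.lt_top)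

theorem MemL1pLinf.add (hf : MemL1pLinf μ f) (hg : MemL1pLinf μ g) : MemL1pLinf μ (f + g) := by
  rw [memL1pLinf_iff_mem_sup] at *
  exact add_mem hf hg

theorem MemL1pLinf.smul (c : ℝ) (hf : MemL1pLinf μ f) : MemL1pLinf μ (c • f) := by
  rw [memL1pLinf_iff_mem_sup] at *
  exact Submodule.smul_mem _ c hf

theorem MemL1pLinf.neg (hf : MemL1pLinf μ f) : MemL1pLinf μ (-f) := by
  simpa using hf.smul (-1)

theorem MemL1pLinf.sub (hf : MemL1pLinf μ f) (hg : MemL1pLinf μ g) : MemL1pLinf μ (f - g) := by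
  simpa only [sub_eq_add_neg] using hf.add hg.neg

theorem eLpNorm_cesaro_le {T : (Ω →ₘ[μ] ℝ) → Ω →ₘ[μ] ℝ} {p C : ℝ≥0∞} (hp : 1 ≤ p)
    (h : ∀ k, eLpNorm (T^[k] f) p μ ≤ C) (n : ℕ) : eLpNorm (cesaro μ T n f) p μ ≤ C := by
  have hn : ‖(n : ℝ)⁻¹‖ₑ * n ≤ 1 := by
    rw [← ENNReal.ofReal_natCast n, Real.enorm_of_nonneg (by positivity),
      ← ENNReal.ofReal_mul (by positivity), ENNReal.ofReal_le_one]
    exact inv_mul_le_one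
  calc eLpNorm (cesaro μ T n f) p μ
      = ‖(n : ℝ)⁻¹‖ₑ * eLpNorm ↑(∑ k ∈ Finset.range n, T^[k] f) p μ := eLpNorm_coeFn_smul _ _ p
    _ ≤ ‖(n : ℝ)⁻¹‖ₑ * ∑ _k ∈ Finset.range n, C := by
        gcongr
        exact (eLpNorm_coeFn_sum_le _ _ hp).trans (Finset.sum_le_sum fun k _ ↦ h k)
    _ = ‖(n : ℝ)⁻¹‖ₑ * n * C := by simp [mul_assoc]
    _ ≤ C := mul_le_of_le_one_left' hn

end L1pLinf

namespace IsPosDS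

variable {μ : Measure Ω} {T S : (Ω →ₘ[μ] ℝ) → Ω →ₘ[μ] ℝ} {f g : Ω →ₘ[μ] ℝ}

theorem memL1pLinf_map (hT : IsPosDS μ T) (hf : MemL1pLinf μ f) : MemL1pLinf μ (T f) := by
  obtain ⟨u, b, hu, hb, rfl⟩ := hf
  have hu' := memL1pLinf_of_eLpNorm_one_ne_top hu
  have hb' := memL1pLinf_of_eLpNorm_top_ne_top hb
  exact ⟨T u, T b, ((hT.norm_one u hu').trans_lt hu.lt_top).ne,
    ((hT.norm_top b hb').trans_lt hb.lt_top).ne, hT.map_add u b hu' hb'⟩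

theorem map_neg (hT : IsPosDS μ T) (hf : MemL1pLinf μ f) : T (-f) = -T f := by
  simpa using hT.map_smul (-1) f hf

theorem map_sub (hT : IsPosDS μ T) (hf : MemL1pLinf μ f) (hg : MemL1pLinf μ g) :
    T (f - g) = T f - T g := by
  rw [sub_eq_add_neg, hT.map_add f (-g) hf hg.neg, hT.map_neg hg, ← sub_eq_add_neg]

protected theorem id : IsPosDS μ id where
  map_add _ _ _ _ := rfl
  map_smul _ _ _ := rfl
  map_pos _ _ hf := hf
  norm_one _ _ := le_rfl
  norm_top _ _ := le_rfl

theorem comp (hS : IsPosDS μ S) (hT : IsPosDS μ T) : IsPosDS μ (S ∘ T) where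
  map_add f g hf hg := by
    simp only [Function.comp_apply, hT.map_add f g hf hg,
      hS.map_add _ _ (hT.memL1pLinf_map hf) (hT.memL1pLinf_map hg)]
  map_smul c f hf := by
    simp only [Function.comp_apply, hT.map_smul c f hf, hS.map_smul c _ (hT.memL1pLinf_map hf)]
  map_pos f hf hf0 := hS.map_pos _ (hT.memL1pLinf_map hf) (hT.map_pos f hf hf0)
  norm_one f hf := (hS.norm_one _ (hT.memL1pLinf_map hf)).trans (hT.norm_one f hf)
  norm_top f hf := (hS.norm_top _ (hT.memL1pLinf_map hf)).trans (hT.norm_top f hf)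

theorem iterate (hT : IsPosDS μ T) : ∀ k : ℕ, IsPosDS μ T^[k]
  | 0 => IsPosDS.id
  | k + 1 => (hT.iterate k).comp hT

theorem cesaro_nonneg (hT : IsPosDS μ T) (hf : MemL1pLinf μ f) (hf0 : 0 ≤ f) (n : ℕ) :
    0 ≤ cesaro μ T n f := by
  have hsum : 0 ≤ ∑ k ∈ Finset.range n, T^[k] f := by
    refine Finset.sum_induction _ (0 ≤ ·) (fun a b ha hb ↦ ?_) le_rfl
      fun k _ ↦ (hT.iterate k).map_pos f hf hf0
    rw [coeFn_nonneg_iff] at *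
    filter_upwards [ha, hb, AEEqFun.coeFn_add a b] with ω haω hbω hω
    simpa only [hω, Pi.add_apply] using add_nonneg haω hbω
  rw [coeFn_nonneg_iff] at *
  filter_upwards [hsum, AEEqFun.coeFn_smul (n : ℝ)⁻¹ (∑ k ∈ Finset.range n, T^[k] f)] with ω hω hs
  simp only [cesaro, hs, Pi.smul_apply, smul_eq_mul]
  positivity

protected theorem cesaro (hT : IsPosDS μ T) (n : ℕ) : IsPosDS μ (cesaro μ T n) where
  map_add f g hf hg := by
    simp only [_root_.cesaro, (hT.iterate _).map_add f g hf hg, Finset.sum_add_distrib, smul_add]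
  map_smul c f hf := by
    simp only [_root_.cesaro, (hT.iterate _).map_smul c f hf, ← Finset.smul_sum, smul_comm c]
  map_pos f hf hf0 := hT.cesaro_nonneg hf hf0 n
  norm_one f hf := eLpNorm_cesaro_le le_rfl (fun k ↦ (hT.iterate k).norm_one f hf) n
  norm_top f hf := eLpNorm_cesaro_le le_top (fun k ↦ (hT.iterate k).norm_top f hf) n

theorem cesaro_eq_self (hf : T f = f) {n : ℕ} (hn : n ≠ 0) : cesaro μ T n f = f :=
  Function.IsFixedPt.birkhoffAverage_eq ℝ hf id (Nat.cast_ne_zero.2 hn)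

theorem cesaro_sub_map (hT : IsPosDS μ T) (hf : MemL1pLinf μ f) (n : ℕ) :
    cesaro μ T n (f - T f) = (n : ℝ)⁻¹ • (f - T^[n] f) := by
  rw [(hT.cesaro n).map_sub hf (hT.memL1pLinf_map hf), ← neg_sub, ← neg_sub (T^[n] f), smul_neg]
  exact congrArg _ (birkhoffAverage_apply_sub_birkhoffAverage T id n f)

end IsPosDS

namespace IsPosDS

variable {μ : Measure Ω} {T : (Ω →ₘ[μ] ℝ) → Ω →ₘ[μ] ℝ} {p : ℝ≥0∞} [Fact (1 ≤ p)]

/-- The restriction to `Lᵖ` of a positive Dunford–Schwartz operator which contracts the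
`Lᵖ`-norm. The inclusion `Lᵖ ⊆ L¹ + L^∞` is taken as an argument, since it is elementary for the
two exponents `1` and `2` at which the notion is used. -/
noncomputable def restrictLp (hT : IsPosDS μ T) (hmem : ∀ x : Lp ℝ p μ, MemL1pLinf μ x.1)
    (hle : ∀ x : Lp ℝ p μ, eLpNorm (T x) p μ ≤ eLpNorm x p μ) : Lp ℝ p μ →L[ℝ] Lp ℝ p μ :=
  LinearMap.mkContinuous
    { toFun x := ⟨T x, (hle x).trans_lt x.2⟩
      map_add' x y := Subtype.ext (hT.map_add x y (hmem x) (hmem y))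
      map_smul' c x := Subtype.ext (hT.map_smul c x (hmem x)) } 1
    fun x ↦ by
      rw [one_mul]
      exact ENNReal.toReal_mono (Lp.eLpNorm_ne_top x) (hle x)

theorem norm_restrictLp_le (hT : IsPosDS μ T) (hmem : ∀ x : Lp ℝ p μ, MemL1pLinf μ x.1)
    (hle : ∀ x : Lp ℝ p μ, eLpNorm (T x) p μ ≤ eLpNorm x p μ) : ‖hT.restrictLp hmem hle‖ ≤ 1 :=
  LinearMap.mkContinuous_norm_le _ zero_le_one _

theorem monotone_restrictLp (hT : IsPosDS μ T) (hmem : ∀ x : Lp ℝ p μ, MemL1pLinf μ x.1)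
    (hle : ∀ x : Lp ℝ p μ, eLpNorm (T x) p μ ≤ eLpNorm x p μ) :
    Monotone (hT.restrictLp hmem hle) :=
  monotone_iff_map_nonneg _ |>.2 fun x hx ↦ hT.map_pos x (hmem x) hx

theorem coe_birkhoffSum_restrictLp (hT : IsPosDS μ T) (hmem : ∀ x : Lp ℝ p μ, MemL1pLinf μ x.1)
    (hle : ∀ x : Lp ℝ p μ, eLpNorm (T x) p μ ≤ eLpNorm x p μ) (n : ℕ) (x : Lp ℝ p μ) :
    (birkhoffSum (hT.restrictLp hmem hle) id n x : Lp ℝ p μ).1 = birkhoffSum T id n x.1 := by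
  have hiter : Function.Semiconj (fun y : Lp ℝ p μ ↦ y.1) (hT.restrictLp hmem hle) T :=
    fun _ ↦ rfl
  simp only [birkhoffSum, AddSubgroup.val_finsetSum, id]
  exact Finset.sum_congr rfl fun k _ ↦ (hiter.iterate_right k).eq x

end IsPosDS

theorem birkhoffSum_id_succ_eq_add_map {E F : Type*} [AddCommMonoid E] [FunLike F E E]
    [AddMonoidHomClass F E E] (T : F) (n : ℕ) (x : E) :
    birkhoffSum T id (n + 1) x = x + T (birkhoffSum T id n x) := by
  rw [birkhoffSum_succ', map_birkhoffSum]
  simp only [birkhoffSum, id, Function.comp_apply, ← Function.iterate_succ_apply,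
    Function.iterate_succ_apply']

theorem partialSups_birkhoffSum_le {E F : Type*} [AddCommGroup E] [Lattice E]
    [IsOrderedAddMonoid E] [FunLike F E E] [AddMonoidHomClass F E E] {T : F} (hT : Monotone T)
    (x : E) (n : ℕ) :
    partialSups (birkhoffSum T id · x) n ≤ 0 ⊔ (x + T (partialSups (birkhoffSum T id · x) n)) := by
  refine partialSups_le _ _ _ fun k hk ↦ ?_
  cases k with
  | zero => simp
  | succ k =>
    rw [birkhoffSum_id_succ_eq_add_map]
    refine le_sup_of_le_right ?_
    gcongr
    exact hT (le_partialSups_of_le (birkhoffSum T id · x) (Nat.le_of_succ_le hk))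

section Hopf

variable {μ : Measure Ω}

theorem integral_eq_norm_of_nonneg {g : Lp ℝ 1 μ} (hg : 0 ≤ g) : ∫ ω, g ω ∂μ = ‖g‖ := by
  rw [L1.norm_eq_integral_norm]
  refine integral_congr_ae ?_
  filter_upwards [(Lp.coeFn_nonneg g).2 hg] with ω hω
  exact (Real.norm_of_nonneg hω).symm

-- Garsia: off `{0 < M}` the maximal function `M` of the partial sums vanishes, on it `M ≤ f + T M`.
theorem setIntegral_maximal_birkhoffSum_nonneg {T : Lp ℝ 1 μ →L[ℝ] Lp ℝ 1 μ} (hmono : Monotone T)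
    (hT : ‖T‖ ≤ 1) (f : Lp ℝ 1 μ) (n : ℕ) :
    0 ≤ ∫ ω in {ω | 0 < partialSups (birkhoffSum T id · f) n ω}, f ω ∂μ := by
  set M := partialSups (birkhoffSum T id · f) n
  set P := {ω | 0 < M ω}
  have hP : MeasurableSet P :=
    measurableSet_lt measurable_const (Lp.stronglyMeasurable M).measurable
  have hM_nonneg : 0 ≤ M := by
    simpa using le_partialSups_of_le (birkhoffSum T id · f) (Nat.zero_le n)
  have hTM_nonneg : 0 ≤ T M := by simpa using hmono hM_nonneg
  have hM_on : ∀ᵐ ω ∂μ, ω ∈ P → M ω ≤ f ω + T M ω := by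
    filter_upwards [(Lp.coeFn_le _ _).2 (partialSups_birkhoffSum_le hmono f n),
      Lp.coeFn_sup 0 (f + T M), Lp.coeFn_zero ℝ 1 μ, Lp.coeFn_add f (T M)]
      with ω hle hsup h0 hadd hω
    rw [hsup, Pi.sup_apply, h0, hadd] at hle
    exact (le_sup_iff.1 hle).resolve_left hω.not_ge
  have hM_off : ∀ᵐ ω ∂μ, ω ∉ P → M ω = 0 := by
    filter_upwards [(Lp.coeFn_nonneg M).2 hM_nonneg] with ω h hω
    exact le_antisymm (not_lt.1 hω) h
  have hint (g : Lp ℝ 1 μ) : Integrable g μ := L1.integrable_coeFn g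
  have hM_norm : ‖M‖ ≤ (∫ ω in P, f ω ∂μ) + ‖T M‖ := calc
    ‖M‖ = ∫ ω in P, M ω ∂μ := by
      rw [← integral_eq_norm_of_nonneg hM_nonneg,
        setIntegral_eq_integral_of_ae_compl_eq_zero hM_off]
    _ ≤ ∫ ω in P, (f ω + T M ω) ∂μ := setIntegral_mono_on_ae (hint M).integrableOn
      ((hint f).add (hint (T M))).integrableOn hP hM_on
    _ = (∫ ω in P, f ω ∂μ) + ∫ ω in P, T M ω ∂μ :=
      integral_add (hint f).integrableOn (hint (T M)).integrableOn
    _ ≤ (∫ ω in P, f ω ∂μ) + ‖T M‖ := by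
      rw [← integral_eq_norm_of_nonneg hTM_nonneg]
      exact add_le_add le_rfl
        (setIntegral_le_integral (hint (T M)) ((Lp.coeFn_nonneg _).2 hTM_nonneg))
  linarith [T.le_of_opNorm_le hT M]

end Hopf

namespace IsPosDS

variable {μ : Measure Ω} {T : (Ω →ₘ[μ] ℝ) → Ω →ₘ[μ] ℝ} {lam : ℝ}

theorem exists_setIntegral_nonneg_of_cesaro_pos (hT : IsPosDS μ T) (x : Lp ℝ 1 μ) (n : ℕ) :
    ∃ P, MeasurableSet P ∧ 0 ≤ ∫ ω in P, x ω ∂μ ∧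
      ∀ᵐ ω ∂μ, (∃ k ≤ n, 0 < cesaro μ T k x ω) → ω ∈ P := by
  have hmem (y : Lp ℝ 1 μ) := memL1pLinf_coe_Lp_one y
  have hle (y : Lp ℝ 1 μ) := hT.norm_one y (hmem y)
  let S (k : ℕ) : Lp ℝ 1 μ := birkhoffSum (hT.restrictLp hmem hle) id k x
  refine ⟨{ω | 0 < partialSups S n ω},
    measurableSet_lt measurable_const (Lp.stronglyMeasurable _).measurable,
    setIntegral_maximal_birkhoffSum_nonneg (hT.monotone_restrictLp hmem hle)
      (hT.norm_restrictLp_le hmem hle) x n, ?_⟩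
  have hS_le : ∀ᵐ ω ∂μ, ∀ k ≤ n, S k ω ≤ partialSups S n ω :=
    ae_all_iff.2 fun k ↦ eventually_imp_distrib_left.2 fun hk ↦
      (Lp.coeFn_le _ _).2 (le_partialSups_of_le S hk)
  have hcesaro : ∀ᵐ ω ∂μ, ∀ k : ℕ, cesaro μ T k x ω = (k : ℝ)⁻¹ * S k ω :=
    ae_all_iff.2 fun k ↦ by
      rw [hT.coe_birkhoffSum_restrictLp hmem hle k x]
      exact AEEqFun.coeFn_smul _ _
  filter_upwards [hS_le, hcesaro] with ω hle hces ⟨k, hk, hpos⟩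
  rw [hces k] at hpos
  exact (pos_of_mul_pos_right hpos (by positivity)).trans_le (hle k hk)

theorem measurableSet_exists_le_lt_cesaro (μ : Measure Ω) (T : (Ω →ₘ[μ] ℝ) → Ω →ₘ[μ] ℝ)
    (u : Ω →ₘ[μ] ℝ) (lam : ℝ) (n : ℕ) : MeasurableSet {ω | ∃ k ≤ n, lam < cesaro μ T k u ω} := by
  measurability

theorem measure_exists_le_lt_cesaro_lt_top (hT : IsPosDS μ T) (x : Lp ℝ 1 μ) (hlam : 0 < lam)
    (n : ℕ) : μ {ω | ∃ k ≤ n, lam < cesaro μ T k x ω} < ∞ := by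
  have hfin (k : ℕ) : μ {ω | lam < cesaro μ T k x ω} < ∞ := by
    have hx := Lp.eLpNorm_lt_top x
    have hA := ((hT.cesaro k).norm_one x (memL1pLinf_of_eLpNorm_one_ne_top hx.ne)).trans_lt hx
    exact (memLp_one_iff_integrable.1
      ⟨(cesaro μ T k x).aestronglyMeasurable, hA⟩).measure_gt_lt_top hlam
  have hunion : {ω | ∃ k ≤ n, lam < cesaro μ T k x ω} =
      ⋃ k ∈ Iic n, {ω | lam < cesaro μ T k x ω} := by ext; simp
  exact hunion ▸ measure_biUnion_lt_top (finite_Iic n) fun k _ ↦ hfin k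

-- As the averages of `b` are at most `lam`, those of `x - b` are positive wherever those of `x`
-- exceed `lam`.
theorem exists_setIntegral_le_of_lt_cesaro (hT : IsPosDS μ T) (x : Lp ℝ 1 μ) {b : Lp ℝ 1 μ}
    (hlam : 0 ≤ lam) (hb : eLpNorm b ∞ μ ≤ ENNReal.ofReal lam) (n : ℕ) :
    ∃ P, MeasurableSet P ∧ ∫ ω in P, b ω ∂μ ≤ ∫ ω in P, x ω ∂μ ∧
      ∀ᵐ ω ∂μ, (∃ k ≤ n, lam < cesaro μ T k x ω) → ω ∈ P := by
  obtain ⟨P, hP, hP_nonneg, hpos⟩ := hT.exists_setIntegral_nonneg_of_cesaro_pos (x - b) n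
  refine ⟨P, hP, ?_, ?_⟩
  · rw [← sub_nonneg, ← integral_sub (L1.integrable_coeFn x).integrableOn
      (L1.integrable_coeFn b).integrableOn]
    exact hP_nonneg.trans_eq (integral_congr_ae (ae_restrict_of_ae (Lp.coeFn_sub x b)))
  have hx_mem := memL1pLinf_coe_Lp_one x
  have hb_mem := memL1pLinf_coe_Lp_one b
  have hcesaro_b : ∀ᵐ ω ∂μ, ∀ k, |cesaro μ T k b ω| ≤ lam := ae_all_iff.2 fun k ↦
    (eLpNorm_top_le_ofReal_iff hlam).1 (((hT.cesaro k).norm_top b hb_mem).trans hb)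
  have hcesaro_sub : ∀ᵐ ω ∂μ, ∀ k,
      cesaro μ T k (x - b : Lp ℝ 1 μ) ω = cesaro μ T k x ω - cesaro μ T k b ω :=
    ae_all_iff.2 fun k ↦ by
      rw [AddSubgroup.coe_sub, (hT.cesaro k).map_sub hx_mem hb_mem]
      exact AEEqFun.coeFn_sub _ _
  filter_upwards [hpos, hcesaro_b, hcesaro_sub] with ω hω hb hsub ⟨k, hk, hlt⟩
  exact hω ⟨k, hk, by linarith [hsub k, (abs_le.1 (hb k)).2]⟩

theorem mul_measureReal_exists_le_lt_cesaro_le (hT : IsPosDS μ T) (x : Lp ℝ 1 μ)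
    (hlam : 0 < lam) (n : ℕ) :
    lam * μ.real {ω | ∃ k ≤ n, lam < cesaro μ T k x ω} ≤ ‖x‖ := by
  set B := {ω | ∃ k ≤ n, lam < cesaro μ T k x ω}
  have hB : MeasurableSet B := measurableSet_exists_le_lt_cesaro μ T x lam n
  have hμB : μ B ≠ ∞ := (hT.measure_exists_le_lt_cesaro_lt_top x hlam n).ne
  let b : Lp ℝ 1 μ := indicatorConstLp 1 hB hμB lam
  have hb : eLpNorm b ∞ μ ≤ ENNReal.ofReal lam := by
    rw [← Real.enorm_of_nonneg hlam.le, eLpNorm_congr_ae indicatorConstLp_coeFn]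
    exact eLpNormEssSup_indicator_const_le B lam
  obtain ⟨P, hP, hb_le, hBP⟩ := hT.exists_setIntegral_le_of_lt_cesaro x hlam.le hb n
  have hB_inter : (B ∩ P : Set Ω) =ᵐ[μ] B := inter_eventuallyEq_left.2 hBP
  have hx : Integrable x μ := L1.integrable_coeFn x
  calc lam * μ.real B = ∫ ω in P, b ω ∂μ := by
        rw [setIntegral_indicatorConstLp hP, smul_eq_mul, mul_comm, measureReal_congr hB_inter]
    _ ≤ ∫ ω in P, x ω ∂μ := hb_le
    _ ≤ ∫ ω in P, ‖x ω‖ ∂μ :=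
        integral_mono hx.integrableOn hx.norm.integrableOn fun ω ↦ le_abs_self (x ω)
    _ ≤ ‖x‖ := by
        rw [L1.norm_eq_integral_norm]
        exact setIntegral_le_integral hx.norm (ae_of_all μ fun ω ↦ norm_nonneg (x ω))

theorem ofReal_mul_measure_exists_lt_cesaro_le (hT : IsPosDS μ T) (u : Ω →ₘ[μ] ℝ)
    (hlam : 0 < lam) :
    ENNReal.ofReal lam * μ {ω | ∃ n, lam < cesaro μ T n u ω} ≤ eLpNorm u 1 μ := by
  rcases eq_or_ne (eLpNorm u 1 μ) ∞ with hu | hu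
  · simp [hu]
  let x : Lp ℝ 1 μ := ⟨u, hu.lt_top⟩
  have hunion : {ω | ∃ n, lam < cesaro μ T n u ω} =
      ⋃ n, {ω | ∃ k ≤ n, lam < cesaro μ T k u ω} := by
    ext ω
    simpa using ⟨fun ⟨n, hn⟩ ↦ ⟨n, n, le_rfl, hn⟩, fun ⟨_, n, _, hn⟩ ↦ ⟨n, hn⟩⟩
  have hmono : Monotone fun n ↦ {ω | ∃ k ≤ n, lam < cesaro μ T k u ω} :=
    fun m n hmn ω ⟨k, hk, hlt⟩ ↦ ⟨k, hk.trans hmn, hlt⟩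
  rw [hunion, hmono.measure_iUnion, ENNReal.mul_iSup]
  refine iSup_le fun n ↦ ?_
  calc ENNReal.ofReal lam * μ {ω | ∃ k ≤ n, lam < cesaro μ T k u ω}
      = ENNReal.ofReal (lam * μ.real {ω | ∃ k ≤ n, lam < cesaro μ T k x ω}) := by
        rw [ENNReal.ofReal_mul hlam.le,
          ofReal_measureReal (hT.measure_exists_le_lt_cesaro_lt_top x hlam n).ne]
    _ ≤ ENNReal.ofReal ‖x‖ :=
        ENNReal.ofReal_le_ofReal (hT.mul_measureReal_exists_le_lt_cesaro_le x hlam n)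
    _ = eLpNorm u 1 μ := ENNReal.ofReal_toReal hu

theorem ofReal_mul_measure_exists_lt_abs_cesaro_le (hT : IsPosDS μ T) (u : Ω →ₘ[μ] ℝ)
    (hlam : 0 < lam) :
    ENNReal.ofReal lam * μ {ω | ∃ n, lam < |cesaro μ T n u ω|} ≤ 2 * eLpNorm u 1 μ := by
  rcases eq_or_ne (eLpNorm u 1 μ) ∞ with hu | hu
  · simp [hu]
  have hneg : ∀ᵐ ω ∂μ, ∀ n, cesaro μ T n (-u) ω = -cesaro μ T n u ω := ae_all_iff.2 fun n ↦ by
    rw [(hT.cesaro n).map_neg (memL1pLinf_of_eLpNorm_one_ne_top hu)]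
    exact AEEqFun.coeFn_neg _
  have hcover : {ω | ∃ n, lam < |cesaro μ T n u ω|} ≤ᵐ[μ]
      ({ω | ∃ n, lam < cesaro μ T n u ω} ∪ {ω | ∃ n, lam < cesaro μ T n (-u) ω} : Set Ω) := by
    filter_upwards [hneg] with ω hω ⟨n, hn⟩
    exact (lt_abs.1 hn).imp (fun h ↦ ⟨n, h⟩) fun h ↦ ⟨n, (hω n).symm ▸ h⟩
  have hu_neg : eLpNorm ↑(-u) 1 μ = eLpNorm u 1 μ :=
    (eLpNorm_congr_ae (AEEqFun.coeFn_neg u)).trans (eLpNorm_neg u 1 μ)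
  calc _ ≤ ENNReal.ofReal lam * (μ {ω | ∃ n, lam < cesaro μ T n u ω} +
          μ {ω | ∃ n, lam < cesaro μ T n (-u) ω}) := by
        gcongr
        exact (measure_mono_ae hcover).trans (measure_union_le _ _)
    _ ≤ eLpNorm u 1 μ + eLpNorm ↑(-u) 1 μ := by
        rw [mul_add]
        exact add_le_add (hT.ofReal_mul_measure_exists_lt_cesaro_le u hlam)
          (hT.ofReal_mul_measure_exists_lt_cesaro_le (-u) hlam)
    _ = 2 * eLpNorm u 1 μ := by rw [hu_neg, two_mul]

end IsPosDS

/-- The `L¹`-norm of the part of `f` exceeding the level `lam`, i.e. the distance in `L¹` from `f`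
to the ball of radius `lam` in `L^∞`. The elements of `R_μ` are those for which it is finite at
each positive level, and it is decreased by positive Dunford–Schwartz operators. -/
noncomputable def excess (μ : Measure Ω) (lam : ℝ) (f : Ω →ₘ[μ] ℝ) : ℝ≥0∞ :=
  ∫⁻ ω, ENNReal.ofReal (|f ω| - lam) ∂μ

section Excess

variable {μ : Measure Ω} {f g : Ω →ₘ[μ] ℝ} {a b lam : ℝ}

theorem excess_zero_left (f : Ω →ₘ[μ] ℝ) : excess μ 0 f = eLpNorm f 1 μ := by
  simp only [excess, sub_zero, eLpNorm_one_eq_lintegral_enorm, Real.enorm_eq_ofReal_abs]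

theorem excess_add_le (f g : Ω →ₘ[μ] ℝ) (a b : ℝ) :
    excess μ (a + b) (f + g) ≤ excess μ a f + excess μ b g := by
  have hf_meas : Measurable fun ω ↦ ENNReal.ofReal (|f ω| - a) := by fun_prop
  rw [excess, excess, excess, ← lintegral_add_left hf_meas]
  refine lintegral_mono_ae ?_
  filter_upwards [AEEqFun.coeFn_add f g] with ω hω
  refine (ENNReal.ofReal_le_ofReal ?_).trans ENNReal.ofReal_add_le
  rw [hω, Pi.add_apply]
  linarith [abs_add_le (f ω) (g ω)]

theorem excess_eq_zero (hlam : 0 ≤ lam) (hf : eLpNorm f ∞ μ ≤ ENNReal.ofReal lam) :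
    excess μ lam f = 0 := by
  rw [excess, lintegral_eq_zero_iff' (by fun_prop)]
  filter_upwards [(eLpNorm_top_le_ofReal_iff hlam).1 hf] with ω hω
  simpa using hω

theorem abs_sub_clamp (hlam : 0 ≤ lam) (t : ℝ) :
    |t - max (-lam) (min t lam)| = max (|t| - lam) 0 := by
  grind

theorem exists_eq_add_of_excess (hlam : 0 ≤ lam) (f : Ω →ₘ[μ] ℝ) : ∃ u b : Ω →ₘ[μ] ℝ, f = u + b ∧
    eLpNorm u 1 μ = excess μ lam f ∧ eLpNorm b ∞ μ ≤ ENNReal.ofReal lam := by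
  have hclamp : Continuous fun t : ℝ ↦ max (-lam) (min t lam) := by fun_prop
  let b := AEEqFun.comp _ hclamp f
  have hb : ∀ᵐ ω ∂μ, b ω = max (-lam) (min (f ω) lam) := AEEqFun.coeFn_comp _ hclamp f
  refine ⟨f - b, b, (sub_add_cancel f b).symm, ?_, (eLpNorm_top_le_ofReal_iff hlam).2 ?_⟩
  · rw [eLpNorm_one_eq_lintegral_enorm, excess]
    refine lintegral_congr_ae ?_
    filter_upwards [hb, AEEqFun.coeFn_sub f b] with ω hω hsub
    rw [hsub, Pi.sub_apply, hω, Real.enorm_eq_ofReal_abs, abs_sub_clamp hlam, ENNReal.ofReal_max,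
      ENNReal.ofReal_zero, max_eq_left zero_le]
  · filter_upwards [hb] with ω hω
    rw [hω, abs_le]
    exact ⟨le_max_left _ _, max_le (by linarith) (min_le_right _ _)⟩

theorem memL1pLinf_of_excess_ne_top (hlam : 0 ≤ lam) (hf : excess μ lam f ≠ ∞) :
    MemL1pLinf μ f := by
  obtain ⟨u, b, rfl, hu, hb⟩ := exists_eq_add_of_excess hlam f
  exact ⟨u, b, hu ▸ hf, (hb.trans_lt ofReal_lt_top).ne, rfl⟩

theorem ofReal_mul_measure_lt_abs_le_excess (f : Ω →ₘ[μ] ℝ) (a b : ℝ) :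
    ENNReal.ofReal a * μ {ω | a + b < |f ω|} ≤ excess μ b f := calc
  _ ≤ ENNReal.ofReal a * μ {ω | ENNReal.ofReal a ≤ ENNReal.ofReal (|f ω| - b)} := by
      gcongr with ω
      exact fun hω ↦ ENNReal.ofReal_le_ofReal (by linarith)
  _ ≤ excess μ b f := mul_meas_ge_le_lintegral (by fun_prop) _

theorem excess_lt_top_of_measure_lt_top (hf : MemL1pLinf μ f) (hlam : μ {ω | lam < |f ω|} < ∞)
    (hlam0 : 0 ≤ lam) : excess μ lam f < ∞ := by
  obtain ⟨u, b, hu, hb, rfl⟩ := hf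
  set s := {ω | lam < |(u + b) ω|}
  have hs : MeasurableSet s := measurableSet_lt measurable_const (u + b).measurable.abs
  calc excess μ lam (u + b) ≤ ∫⁻ ω, ‖u ω‖ₑ + s.indicator (fun _ ↦ eLpNorm b ∞ μ) ω ∂μ := by
        refine lintegral_mono_ae ?_
        filter_upwards [AEEqFun.coeFn_add u b, ae_le_eLpNormEssSup (f := b) (μ := μ)] with ω hadd hω
        by_cases hωs : ω ∈ s
        · rw [indicator_of_mem hωs]
          calc ENNReal.ofReal (|(u + b) ω| - lam) ≤ ENNReal.ofReal |(u + b) ω| :=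
                ENNReal.ofReal_le_ofReal (sub_le_self _ hlam0)
            _ = ‖u ω + b ω‖ₑ := by rw [← Real.enorm_eq_ofReal_abs, hadd, Pi.add_apply]
            _ ≤ ‖u ω‖ₑ + eLpNorm b ∞ μ := (enorm_add_le _ _).trans (add_le_add le_rfl hω)
        · rw [ENNReal.ofReal_of_nonpos (sub_nonpos.2 (not_lt.1 hωs))]
          exact zero_le
    _ = eLpNorm u 1 μ + eLpNorm b ∞ μ * μ s := by
        rw [lintegral_add_left (by fun_prop), lintegral_indicator_const hs,
          eLpNorm_one_eq_lintegral_enorm]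
    _ < ∞ := ENNReal.add_lt_top.2 ⟨hu.lt_top, ENNReal.mul_lt_top hb.lt_top hlam⟩

theorem memRmu_iff_excess_lt_top :
    MemRmu μ f ↔ ∀ lam > 0, excess μ lam f < ∞ := by
  refine ⟨fun hf lam hlam ↦ excess_lt_top_of_measure_lt_top hf.1 (hf.2 lam hlam) hlam.le,
    fun hf ↦ ⟨memL1pLinf_of_excess_ne_top zero_le_one (hf 1 zero_lt_one).ne, fun lam hlam ↦ ?_⟩⟩
  have h := (ofReal_mul_measure_lt_abs_le_excess f (lam / 2) (lam / 2)).trans_lt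
    (hf _ (half_pos hlam))
  rw [add_halves] at h
  exact ENNReal.lt_top_of_mul_ne_top_right h.ne (by simpa using hlam)

theorem eLpNorm_two_sq_eq_lintegral (f : Ω → ℝ) :
    eLpNorm f 2 μ ^ 2 = ∫⁻ ω, ‖f ω‖ₑ ^ 2 ∂μ := by
  simpa using eLpNorm_nnreal_pow_eq_lintegral (f := f) (μ := μ) (p := 2) two_ne_zero

theorem ofReal_mul_excess_le_eLpNorm_two_sq (hlam : 0 ≤ lam) (f : Ω →ₘ[μ] ℝ) :
    ENNReal.ofReal (4 * lam) * excess μ lam f ≤ eLpNorm f 2 μ ^ 2 := by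
  rw [eLpNorm_two_sq_eq_lintegral, excess, ← lintegral_const_mul _ (by fun_prop)]
  refine lintegral_mono fun ω ↦ ?_
  rw [← ENNReal.ofReal_mul (by positivity), Real.enorm_eq_ofReal_abs,
    ← ENNReal.ofReal_pow (abs_nonneg _)]
  refine ENNReal.ofReal_le_ofReal ?_
  nlinarith [sq_nonneg (|f ω| - 2 * lam)]

theorem excess_le_liminf {F : ℕ → Ω →ₘ[μ] ℝ}
    (hF : ∀ᵐ ω ∂μ, Tendsto (fun n ↦ F n ω) atTop (𝓝 (f ω))) :
    excess μ lam f ≤ liminf (fun n ↦ excess μ lam (F n)) atTop := calc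
  _ = ∫⁻ ω, liminf (fun n ↦ ENNReal.ofReal (|F n ω| - lam)) atTop ∂μ := by
      refine lintegral_congr_ae ?_
      filter_upwards [hF] with ω hω
      exact (ENNReal.tendsto_ofReal (hω.abs.sub_const lam)).liminf_eq.symm
  _ ≤ _ := lintegral_liminf_le fun n ↦ by fun_prop

theorem IsPosDS.excess_map_le {T : (Ω →ₘ[μ] ℝ) → Ω →ₘ[μ] ℝ} (hT : IsPosDS μ T) (hlam : 0 ≤ lam)
    (f : Ω →ₘ[μ] ℝ) : excess μ lam (T f) ≤ excess μ lam f := by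
  rcases eq_or_ne (excess μ lam f) ∞ with hf | hf
  · simp [hf]
  obtain ⟨u, b, rfl, hu, hb⟩ := exists_eq_add_of_excess hlam f
  have hu_mem := memL1pLinf_of_eLpNorm_one_ne_top (hu ▸ hf)
  have hb_mem := memL1pLinf_of_eLpNorm_top_ne_top (hb.trans_lt ofReal_lt_top).ne
  calc excess μ lam (T (u + b)) = excess μ (0 + lam) (T u + T b) := by
        rw [hT.map_add u b hu_mem hb_mem, zero_add]
    _ ≤ excess μ 0 (T u) + excess μ lam (T b) := excess_add_le _ _ _ _
    _ = eLpNorm (T u) 1 μ := by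
        rw [excess_zero_left, excess_eq_zero hlam ((hT.norm_top b hb_mem).trans hb), add_zero]
    _ ≤ excess μ lam (u + b) := (hT.norm_one u hu_mem).trans_eq hu

theorem IsPosDS.ofReal_mul_measure_exists_lt_abs_cesaro_le_excess
    {T : (Ω →ₘ[μ] ℝ) → Ω →ₘ[μ] ℝ} (hT : IsPosDS μ T) (ha : 0 < a) (hb : 0 ≤ b)
    (f : Ω →ₘ[μ] ℝ) :
    ENNReal.ofReal a * μ {ω | ∃ n, a + b < |cesaro μ T n f ω|} ≤ 2 * excess μ b f := by
  rcases eq_or_ne (excess μ b f) ∞ with hf | hf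
  · simp [hf]
  obtain ⟨u, v, rfl, hu, hv⟩ := exists_eq_add_of_excess hb f
  have hu_mem := memL1pLinf_of_eLpNorm_one_ne_top (hu ▸ hf)
  have hv_mem := memL1pLinf_of_eLpNorm_top_ne_top (hv.trans_lt ofReal_lt_top).ne
  rw [← hu]
  refine le_trans ?_ (hT.ofReal_mul_measure_exists_lt_abs_cesaro_le u ha)
  refine mul_le_mul_right (measure_mono_ae ?_) _
  have hcesaro_v : ∀ᵐ ω ∂μ, ∀ n, |cesaro μ T n v ω| ≤ b := ae_all_iff.2 fun n ↦
    (eLpNorm_top_le_ofReal_iff hb).1 (((hT.cesaro n).norm_top v hv_mem).trans hv)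
  have hcesaro_add : ∀ᵐ ω ∂μ, ∀ n,
      cesaro μ T n (u + v) ω = cesaro μ T n u ω + cesaro μ T n v ω := ae_all_iff.2 fun n ↦ by
    rw [(hT.cesaro n).map_add u v hu_mem hv_mem]
    exact AEEqFun.coeFn_add _ _
  filter_upwards [hcesaro_v, hcesaro_add] with ω hv hadd ⟨n, hn⟩
  exact ⟨n, by linarith [hadd n ▸ abs_add_le (cesaro μ T n u ω) (cesaro μ T n v ω), hv n]⟩

end Excess

section L2

variable {μ : Measure Ω} {f : Ω →ₘ[μ] ℝ}

theorem memL1pLinf_of_eLpNorm_two_ne_top (hf : eLpNorm f 2 μ ≠ ∞) : MemL1pLinf μ f := by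
  refine memL1pLinf_of_excess_ne_top zero_le_one fun h ↦ hf ?_
  have h2 := ofReal_mul_excess_le_eLpNorm_two_sq zero_le_one f
  rw [h, ENNReal.mul_top (by simp), top_le_iff] at h2
  exact (ENNReal.pow_eq_top_iff.1 h2).1

theorem eLpNorm_two_sq_eq_eLpNorm_one_mul_self (f : Ω →ₘ[μ] ℝ) :
    eLpNorm f 2 μ ^ 2 = eLpNorm ↑(f * f) 1 μ := by
  rw [eLpNorm_two_sq_eq_lintegral, eLpNorm_one_eq_lintegral_enorm]
  refine lintegral_congr_ae ?_
  filter_upwards [AEEqFun.coeFn_mul f f] with ω hω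
  rw [hω, Pi.mul_apply, enorm_mul, sq]

theorem eLpNorm_coeFn_one_top_le (μ : Measure Ω) :
    eLpNorm ↑(1 : Ω →ₘ[μ] ℝ) ∞ μ ≤ ENNReal.ofReal 1 := by
  rw [eLpNorm_top_le_ofReal_iff zero_le_one]
  filter_upwards [AEEqFun.coeFn_one (μ := μ) (α := Ω) (β := ℝ)] with ω hω
  simp [hω]

theorem memL1pLinf_one (μ : Measure Ω) : MemL1pLinf μ 1 :=
  memL1pLinf_of_eLpNorm_top_ne_top ((eLpNorm_coeFn_one_top_le μ).trans_lt ofReal_lt_top).ne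

theorem sq_le_of_forall_rat {q t : ℝ} (h : ∀ a : ℚ, 0 ≤ q - 2 * a * t + (a : ℝ) ^ 2) :
    t ^ 2 ≤ q := by
  have ht : 0 ≤ q - 2 * t * t + t ^ 2 :=
    isClosed_property (p := fun a : ℝ ↦ 0 ≤ q - 2 * a * t + a ^ 2) Rat.denseRange_cast
      (isClosed_le continuous_const (by fun_prop)) h t
  linarith

end L2

namespace IsPosDS

variable {μ : Measure Ω} {T : (Ω →ₘ[μ] ℝ) → Ω →ₘ[μ] ℝ} {f : Ω →ₘ[μ] ℝ}

theorem ae_map_one_le_one (hT : IsPosDS μ T) : ∀ᵐ ω ∂μ, T 1 ω ≤ 1 := by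
  have h := (hT.norm_top 1 (memL1pLinf_one μ)).trans (eLpNorm_coeFn_one_top_le μ)
  filter_upwards [(eLpNorm_top_le_ofReal_iff zero_le_one).1 h] with ω hω
  exact (le_abs_self _).trans hω

theorem ae_nonneg_map_mul_self_sub (hT : IsPosDS μ T) (hf : MemL1pLinf μ f)
    (hff : MemL1pLinf μ (f * f)) (a : ℝ) :
    ∀ᵐ ω ∂μ, 0 ≤ T (f * f) ω - 2 * a * T f ω + a ^ 2 * T 1 ω := by
  have hcoe (g₁ g₂ g₃ : Ω →ₘ[μ] ℝ) : ↑(g₁ - (2 * a) • g₂ + a ^ 2 • g₃) =ᵐ[μ]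
      fun ω ↦ g₁ ω - 2 * a * g₂ ω + a ^ 2 * g₃ ω := by
    filter_upwards [AEEqFun.coeFn_add (g₁ - (2 * a) • g₂) (a ^ 2 • g₃),
      AEEqFun.coeFn_sub g₁ ((2 * a) • g₂), AEEqFun.coeFn_smul (2 * a) g₂,
      AEEqFun.coeFn_smul (a ^ 2) g₃] with ω hadd hsub hsmul₂ hsmul₃
    rw [hadd, Pi.add_apply, hsub, Pi.sub_apply, hsmul₂, hsmul₃]
    rfl
  have hsq : 0 ≤ f * f - (2 * a) • f + a ^ 2 • 1 := by
    rw [coeFn_nonneg_iff]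
    filter_upwards [hcoe (f * f) f 1, AEEqFun.coeFn_mul f f,
      AEEqFun.coeFn_one (μ := μ) (α := Ω) (β := ℝ)] with ω hω hmul hone
    rw [hω, hmul, hone, Pi.mul_apply, Pi.one_apply]
    linarith [sq_nonneg (f ω - a)]
  have hsub := hff.sub (hf.smul (2 * a))
  have hone := (memL1pLinf_one μ).smul (a ^ 2)
  have hT_sq := hT.map_pos _ (hsub.add hone) hsq
  rw [hT.map_add _ _ hsub hone, hT.map_sub hff (hf.smul _), hT.map_smul _ _ hf,
    hT.map_smul _ _ (memL1pLinf_one μ), coeFn_nonneg_iff] at hT_sq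
  filter_upwards [hT_sq, hcoe (T (f * f)) (T f) (T 1)] with ω hω hcoe
  rwa [hcoe] at hω

-- Kadison's inequality: the positivity of `T ((f - a) ^ 2)` is optimised over the constant `a`.
theorem ae_sq_map_le (hT : IsPosDS μ T) (hf : MemL1pLinf μ f) (hff : MemL1pLinf μ (f * f)) :
    ∀ᵐ ω ∂μ, T f ω ^ 2 ≤ T (f * f) ω := by
  filter_upwards [hT.ae_map_one_le_one,
    ae_all_iff.2 fun a : ℚ ↦ hT.ae_nonneg_map_mul_self_sub hf hff a] with ω hone hω
  exact sq_le_of_forall_rat fun a ↦ by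
    linarith [hω a, mul_le_of_le_one_right (sq_nonneg (a : ℝ)) hone]

theorem eLpNorm_two_map_le (hT : IsPosDS μ T) (f : Ω →ₘ[μ] ℝ) :
    eLpNorm (T f) 2 μ ≤ eLpNorm f 2 μ := by
  rcases eq_or_ne (eLpNorm f 2 μ) ∞ with hf | hf
  · simp [hf]
  have hff : MemL1pLinf μ (f * f) := memL1pLinf_of_eLpNorm_one_ne_top <| by
    rw [← eLpNorm_two_sq_eq_eLpNorm_one_mul_self]
    exact ENNReal.pow_ne_top hf
  refine (ENNReal.pow_le_pow_left_iff two_ne_zero).1 ?_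
  calc eLpNorm (T f) 2 μ ^ 2 = ∫⁻ ω, ‖T f ω‖ₑ ^ 2 ∂μ := eLpNorm_two_sq_eq_lintegral _
    _ ≤ ∫⁻ ω, ‖T (f * f) ω‖ₑ ∂μ := by
      refine lintegral_mono_ae ?_
      filter_upwards [hT.ae_sq_map_le (memL1pLinf_of_eLpNorm_two_ne_top hf) hff] with ω hω
      rw [← enorm_pow, Real.enorm_of_nonneg (sq_nonneg _)]
      exact (ENNReal.ofReal_le_ofReal hω).trans (Real.ofReal_le_enorm _)
    _ = eLpNorm (T (f * f)) 1 μ := eLpNorm_one_eq_lintegral_enorm.symm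
    _ ≤ eLpNorm ↑(f * f) 1 μ := hT.norm_one _ hff
    _ = eLpNorm f 2 μ ^ 2 := (eLpNorm_two_sq_eq_eLpNorm_one_mul_self f).symm

end IsPosDS

theorem sub_birkhoffAverage_mem_range {𝕜 E : Type*} [Field 𝕜] [CharZero 𝕜] [AddCommGroup E]
    [Module 𝕜 E] (S : E →ₗ[𝕜] E) {n : ℕ} (hn : n ≠ 0) (x : E) :
    x - birkhoffAverage 𝕜 S id n x ∈ LinearMap.range (1 - S) := by
  let q := (LinearMap.range (1 - S)).mkQ
  have hq : q ∘ S = q := funext fun y ↦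
    (Submodule.Quotient.eq _).2 (neg_mem_iff.1 ⟨y, by simp⟩)
  rw [← Submodule.Quotient.eq]
  calc q x = birkhoffAverage 𝕜 S q n x := by
        rw [birkhoffAverage_of_comp_eq 𝕜 hq (Nat.cast_ne_zero.2 hn)]
    _ = q (birkhoffAverage 𝕜 S id n x) := (map_birkhoffAverage 𝕜 𝕜 q S id n x).symm

theorem exists_norm_sub_fixed_add_coboundary_lt {𝕜 E : Type*} [RCLike 𝕜]
    [NormedAddCommGroup E] [InnerProductSpace 𝕜 E] [CompleteSpace E] {S : E →L[𝕜] E}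
    (hS : ‖S‖ ≤ 1) {D : Set E} (hD : Dense D) (x : E) {ε : ℝ} (hε : 0 < ε) :
    ∃ p w, S p = p ∧ w ∈ D ∧ ‖x - (p + (w - S w))‖ < ε := by
  have hlim := S.tendsto_birkhoffAverage_orthogonalProjection hS x
  generalize (S.eqLocus (1 : E →L[𝕜] E)).orthogonalProjectionOnto x = p at hlim
  obtain ⟨p, hp⟩ := p
  obtain ⟨n, hn, hn0⟩ := ((Metric.tendsto_nhds.1 hlim ε hε).and (eventually_ne_atTop 0)).exists
  obtain ⟨w₀, hw₀⟩ := sub_birkhoffAverage_mem_range (S : E →ₗ[𝕜] E) hn0 x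
  have hx : x - (p + (w₀ - S w₀)) = birkhoffAverage 𝕜 S id n x - p := by
    have hw₀' : w₀ - S w₀ = x - birkhoffAverage 𝕜 S id n x := hw₀
    rw [hw₀']
    abel
  have hopen : IsOpen {w | ‖x - (p + (w - S w))‖ < ε} :=
    isOpen_lt (by fun_prop) continuous_const
  obtain ⟨w, hwD, hw⟩ := hD.exists_mem_open hopen
    ⟨w₀, by rwa [mem_ofPred_eq, hx, ← dist_eq_norm]⟩
  exact ⟨p, w, hp, hwD, hw⟩

section Approximation

variable {μ : Measure Ω} {T : (Ω →ₘ[μ] ℝ) → Ω →ₘ[μ] ℝ} {f : Ω →ₘ[μ] ℝ}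

theorem exists_eLpNorm_sub_lt_of_forall_ne_top {p : ℝ≥0∞} (hp0 : p ≠ 0) (hp : p ≠ ∞)
    (hf : eLpNorm f p μ ≠ ∞) {ε : ℝ≥0∞} (hε : ε ≠ 0) :
    ∃ g : Ω →ₘ[μ] ℝ, eLpNorm ↑(f - g) p μ < ε ∧ ∀ q, eLpNorm g q μ ≠ ∞ := by
  obtain ⟨s, hs, hs_mem⟩ :=
    MemLp.exists_simpleFunc_eLpNorm_sub_lt ⟨f.aestronglyMeasurable, hf.lt_top⟩ hp hε
  have hg := AEEqFun.coeFn_mk (μ := μ) s s.aestronglyMeasurable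
  refine ⟨AEEqFun.mk s s.aestronglyMeasurable, ?_, fun q ↦ ?_⟩
  · rwa [eLpNorm_congr_ae ((AEEqFun.coeFn_sub _ _).trans (.sub .rfl hg))]
  · rw [eLpNorm_congr_ae hg]
    exact (SimpleFunc.memLp_of_finite_measure_preimage q
      ((SimpleFunc.memLp_iff hp0 hp).1 hs_mem)).eLpNorm_ne_top

theorem dense_setOf_eLpNorm_top_ne_top (μ : Measure Ω) :
    Dense {w : Lp ℝ 2 μ | eLpNorm w ∞ μ ≠ ∞} := by
  refine EMetric.dense_iff.2 fun w ε hε ↦ ?_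
  obtain ⟨g, hg, hg_top⟩ := exists_eLpNorm_sub_lt_of_forall_ne_top two_ne_zero ofNat_ne_top
    (Lp.eLpNorm_ne_top w) hε.ne'
  refine ⟨⟨g, (hg_top 2).lt_top⟩, ?_, hg_top ∞⟩
  rw [Metric.mem_eball, edist_comm, edist_eq_enorm_sub, Lp.enorm_def]
  exact hg

theorem excess_le_of_eLpNorm_two_le {lam ε : ℝ} (hlam : 0 < lam) (hε : 0 ≤ ε)
    (hf : eLpNorm f 2 μ ≤ ENNReal.ofReal √(4 * lam * ε)) : excess μ lam f ≤ ENNReal.ofReal ε := by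
  have h4 : 0 < 4 * lam := by positivity
  refine (ENNReal.mul_le_mul_iff_right (ofReal_pos.2 h4).ne' ofReal_ne_top).1 ?_
  calc ENNReal.ofReal (4 * lam) * excess μ lam f ≤ eLpNorm f 2 μ ^ 2 :=
        ofReal_mul_excess_le_eLpNorm_two_sq hlam.le f
    _ ≤ ENNReal.ofReal √(4 * lam * ε) ^ 2 := by gcongr
    _ = ENNReal.ofReal (4 * lam) * ENNReal.ofReal ε := by
        rw [← ENNReal.ofReal_pow (by positivity), Real.sq_sqrt (by positivity),
          ENNReal.ofReal_mul h4.le]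

theorem IsPosDS.exists_eLpNorm_two_sub_fixed_add_coboundary_lt (hT : IsPosDS μ T)
    (hf : eLpNorm f 2 μ ≠ ∞) {ε : ℝ} (hε : 0 < ε) :
    ∃ p w : Ω →ₘ[μ] ℝ, T p = p ∧ MemL1pLinf μ p ∧ eLpNorm w ∞ μ ≠ ∞ ∧
      eLpNorm ↑(f - (p + (w - T w))) 2 μ < ENNReal.ofReal ε := by
  have hmem (y : Lp ℝ 2 μ) : MemL1pLinf μ y.1 :=
    memL1pLinf_of_eLpNorm_two_ne_top (Lp.eLpNorm_ne_top y)
  have hle (y : Lp ℝ 2 μ) := hT.eLpNorm_two_map_le y.1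
  obtain ⟨p, w, hp, hw, hlt⟩ := exists_norm_sub_fixed_add_coboundary_lt
    (hT.norm_restrictLp_le hmem hle) (dense_setOf_eLpNorm_top_ne_top μ) ⟨f, hf.lt_top⟩ hε
  refine ⟨p, w, congrArg Subtype.val hp, hmem p, hw, ?_⟩
  rwa [← ENNReal.ofReal_lt_ofReal_iff hε, ofReal_norm, Lp.enorm_def] at hlt

theorem IsPosDS.exists_excess_sub_fixed_add_coboundary_le (hT : IsPosDS μ T) (hf : MemRmu μ f)
    {lam ε : ℝ} (hlam : 0 < lam) (hε : 0 < ε) :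
    ∃ p w : Ω →ₘ[μ] ℝ, T p = p ∧ MemL1pLinf μ p ∧ eLpNorm w ∞ μ ≠ ∞ ∧
      excess μ lam (f - (p + (w - T w))) ≤ ENNReal.ofReal ε := by
  obtain ⟨u, b, rfl, hu, hb⟩ := exists_eq_add_of_excess (half_pos hlam).le f
  have hu_ne_top : eLpNorm u 1 μ ≠ ∞ :=
    hu ▸ (memRmu_iff_excess_lt_top.1 hf _ (half_pos hlam)).ne
  obtain ⟨x, hx, hx_ne_top⟩ := exists_eLpNorm_sub_lt_of_forall_ne_top one_ne_zero one_ne_top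
    hu_ne_top (ofReal_pos.2 (half_pos hε)).ne'
  obtain ⟨p, w, hp, hp_mem, hw, hlt⟩ := hT.exists_eLpNorm_two_sub_fixed_add_coboundary_lt
    (hx_ne_top 2) (ε := √(4 * (lam / 2) * (ε / 2))) (by positivity)
  refine ⟨p, w, hp, hp_mem, hw, ?_⟩
  set r := x - (p + (w - T w)) with hr
  have hsplit : u + b - (p + (w - T w)) = u - x + b + r := by
    rw [hr]
    abel
  calc excess μ lam (u + b - (p + (w - T w)))
      = excess μ (0 + lam / 2 + lam / 2) (u - x + b + r) := by
        rw [hsplit, zero_add, add_halves]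
    _ ≤ excess μ 0 (u - x) + excess μ (lam / 2) b + excess μ (lam / 2) r :=
        (excess_add_le _ _ _ _).trans (add_le_add_left (excess_add_le _ _ _ _) _)
    _ ≤ ENNReal.ofReal (ε / 2) + 0 + ENNReal.ofReal (ε / 2) := by
        rw [excess_zero_left, excess_eq_zero (half_pos hlam).le hb]
        gcongr
        exact excess_le_of_eLpNorm_two_le (half_pos hlam) (half_pos hε).le hlt.le
    _ = ENNReal.ofReal ε := by
        rw [add_zero, ← ENNReal.ofReal_add (half_pos hε).le (half_pos hε).le, add_halves]

end Approximation

/-- Almost uniform Cauchy sequences, i.e. those which are uniformly Cauchy off sets of arbitrarily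
small measure. The exceptional set may here depend on the tolerance `δ`; a single one for all `δ`
is provided by `AuCauchySeq.exists_uniformCauchySeqOn`. -/
def AuCauchySeq (μ : Measure Ω) (F : ℕ → Ω →ₘ[μ] ℝ) : Prop :=
  ∀ δ > 0, ∀ ε > 0, ∃ N, μ {ω | ∃ m ≥ N, ∃ n ≥ N, δ < |F m ω - F n ω|} ≤ ENNReal.ofReal ε

section AlmostUniform

variable {μ : Measure Ω} {F : ℕ → Ω →ₘ[μ] ℝ}

theorem auCauchySeq_of_tendsto_eLpNorm_top {g : Ω →ₘ[μ] ℝ}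
    (h : Tendsto (fun n ↦ eLpNorm ↑(F n - g) ∞ μ) atTop (𝓝 0)) : AuCauchySeq μ F := by
  intro δ hδ ε _
  obtain ⟨N, hN⟩ := eventually_atTop.1 (h.eventually_le_const (ofReal_pos.2 (half_pos hδ)))
  have hclose : ∀ᵐ ω ∂μ, ∀ n ≥ N, |F n ω - g ω| ≤ δ / 2 := by
    refine ae_all_iff.2 fun n ↦ eventually_imp_distrib_left.2 fun hn ↦ ?_
    filter_upwards [(eLpNorm_top_le_ofReal_iff (half_pos hδ).le).1 (hN n hn),
      AEEqFun.coeFn_sub (F n) g] with ω hω hsub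
    rwa [hsub] at hω
  refine ⟨N, (measure_mono_null_ae ?_ measure_empty).trans_le zero_le⟩
  filter_upwards [hclose] with ω hω ⟨m, hm, n, hn, hlt⟩
  have htri := abs_sub_le (F m ω) (g ω) (F n ω)
  rw [abs_sub_comm (g ω)] at htri
  linarith [hω m hm, hω n hn]

theorem auCauchySeq_of_forall_exists_measure_le
    (h : ∀ δ > 0, ∀ ε > 0, ∃ G : ℕ → Ω →ₘ[μ] ℝ, AuCauchySeq μ G ∧
      μ {ω | ∃ n, δ < |F n ω - G n ω|} ≤ ENNReal.ofReal ε) : AuCauchySeq μ F := by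
  intro δ hδ ε hε
  obtain ⟨G, hG, hFG⟩ := h (δ / 3) (by positivity) (ε / 2) (half_pos hε)
  obtain ⟨N, hN⟩ := hG (δ / 3) (by positivity) (ε / 2) (half_pos hε)
  have hcover : {ω | ∃ m ≥ N, ∃ n ≥ N, δ < |F m ω - F n ω|} ⊆
      {ω | ∃ n, δ / 3 < |F n ω - G n ω|} ∪
        {ω | ∃ m ≥ N, ∃ n ≥ N, δ / 3 < |G m ω - G n ω|} := by
    rintro ω ⟨m, hm, n, hn, hlt⟩
    by_contra! hω
    simp only [mem_union, mem_ofPred_eq, not_or, not_exists, not_and, not_lt] at hω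
    have htri : |F m ω - F n ω| ≤ |F m ω - G m ω| + |G m ω - G n ω| + |F n ω - G n ω| := by
      rw [abs_sub_comm (F n ω)]
      exact (abs_sub_le _ (G n ω) _).trans (add_le_add_left (abs_sub_le _ _ _) _)
    linarith [hω.1 m, hω.1 n, hω.2 m hm n hn]
  refine ⟨N, (measure_mono hcover).trans ((measure_union_le _ _).trans ?_)⟩
  calc _ ≤ ENNReal.ofReal (ε / 2) + ENNReal.ofReal (ε / 2) := add_le_add hFG hN
    _ = ENNReal.ofReal ε := by
      rw [← ENNReal.ofReal_add (half_pos hε).le (half_pos hε).le, add_halves]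

theorem AuCauchySeq.exists_uniformCauchySeqOn (hF : AuCauchySeq μ F) {ε : ℝ} (hε : 0 < ε) :
    ∃ E, MeasurableSet E ∧ μ Eᶜ ≤ ENNReal.ofReal ε ∧
      UniformCauchySeqOn (fun n ω ↦ F n ω) atTop E := by
  choose N hN using fun j : ℕ ↦
    hF (1 / ((j : ℝ) + 1)) Nat.one_div_pos_of_nat (ε / 2 / 2 ^ j) (by positivity)
  let B (j : ℕ) := {ω | ∃ m ≥ N j, ∃ n ≥ N j, 1 / ((j : ℝ) + 1) < |F m ω - F n ω|}
  refine ⟨(toMeasurable μ (⋃ j, B j))ᶜ, (measurableSet_toMeasurable _ _).compl, ?_,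
    Metric.uniformCauchySeqOn_iff.2 fun δ hδ ↦ ?_⟩
  · calc μ (toMeasurable μ (⋃ j, B j))ᶜᶜ = μ (⋃ j, B j) := by
          rw [compl_compl, measure_toMeasurable]
      _ ≤ ∑' j, μ (B j) := measure_iUnion_le _
      _ ≤ ∑' j, ENNReal.ofReal (ε / 2 / 2 ^ j) := ENNReal.tsum_le_tsum hN
      _ = ENNReal.ofReal ε := by
          rw [← ENNReal.ofReal_tsum_of_nonneg (fun j ↦ by positivity) (summable_geometric_two' ε),
            tsum_geometric_two']
  · obtain ⟨j, hj⟩ := exists_nat_one_div_lt hδ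
    refine ⟨N j, fun m hm n hn ω hω ↦ lt_of_le_of_lt (not_lt.1 fun hlt ↦ ?_) hj⟩
    exact hω (subset_toMeasurable _ _ (mem_iUnion.2 ⟨j, m, hm, n, hn, hlt⟩))

theorem auTendsto_of_forall_tendstoUniformlyOn {ι : Type*} {l : Filter ι} {F : ι → Ω →ₘ[μ] ℝ}
    {g : Ω →ₘ[μ] ℝ} {g₀ : Ω → ℝ} (hg : g =ᵐ[μ] g₀)
    (h : ∀ ε > 0, ∃ E, MeasurableSet E ∧ μ Eᶜ ≤ ENNReal.ofReal ε ∧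
      TendstoUniformlyOn (fun i ω ↦ F i ω) g₀ l E) : AuTendsto μ l F g := by
  intro ε hε
  obtain ⟨E, hE, hμE, hunif⟩ := h ε hε
  refine ⟨E, hE, hμE, ENNReal.tendsto_nhds_zero.2 fun δ hδ ↦ ?_⟩
  obtain ⟨c, hc0, hc, hcδ⟩ := ENNReal.lt_iff_exists_real_btwn.1 hδ
  filter_upwards [Metric.tendstoUniformlyOn_iff.1 hunif c (ofReal_pos.1 hc)] with i hi
  refine ((eLpNorm_top_le_ofReal_iff hc0).2 ?_).trans hcδ.le
  filter_upwards [hg, AEEqFun.coeFn_sub (F i) g] with ω hgω hsub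
  by_cases hω : ω ∈ E
  · rw [indicator_of_mem hω, hsub, Pi.sub_apply, hgω, ← Real.dist_eq, dist_comm]
    exact (hi ω hω).le
  · simpa [hω] using hc0

theorem AuCauchySeq.exists_tendsto_auTendsto (hF : AuCauchySeq μ F) : ∃ g : Ω →ₘ[μ] ℝ,
    (∀ᵐ ω ∂μ, Tendsto (fun n ↦ F n ω) atTop (𝓝 (g ω))) ∧ AuTendsto μ atTop F g := by
  choose! E hE hμE hunif using fun ε : ℝ ↦ hF.exists_uniformCauchySeqOn (ε := ε)
  let g₀ (ω : Ω) : ℝ := limUnder atTop fun n ↦ F n ω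
  have hlim_on {ε : ℝ} (hε : 0 < ε) {ω : Ω} (hω : ω ∈ E ε) :
      Tendsto (fun n ↦ F n ω) atTop (𝓝 (g₀ ω)) :=
    ((hunif ε hε).cauchySeq hω).tendsto_limUnder
  have hae : ∀ᵐ ω ∂μ, ∃ ε > 0, ω ∈ E ε := by
    refine ae_iff.2 (le_zero_iff.1 (ENNReal.le_of_forall_pos_le_add fun ε hε _ ↦ ?_))
    rw [zero_add, ← ENNReal.ofReal_coe_nnreal]
    refine (measure_mono ?_).trans (hμE ε hε)
    exact fun ω hω hωE ↦ hω ⟨ε, hε, hωE⟩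
  have hlim : ∀ᵐ ω ∂μ, Tendsto (fun n ↦ F n ω) atTop (𝓝 (g₀ ω)) :=
    hae.mono fun ω ⟨ε, hε, hω⟩ ↦ hlim_on hε hω
  have hg := aestronglyMeasurable_of_tendsto_ae atTop (fun n ↦ (F n).aestronglyMeasurable) hlim
  have hcoe := AEEqFun.coeFn_mk g₀ hg
  refine ⟨AEEqFun.mk g₀ hg, ?_, auTendsto_of_forall_tendstoUniformlyOn hcoe fun ε hε ↦
    ⟨E ε, hE ε hε, hμE ε hε, (hunif ε hε).tendstoUniformlyOn_of_tendsto fun _ ↦ hlim_on hε⟩⟩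
  filter_upwards [hlim, hcoe] with ω hω hcoe
  rwa [hcoe]

end AlmostUniform

section Ergodic

variable {μ : Measure Ω} {T : (Ω →ₘ[μ] ℝ) → Ω →ₘ[μ] ℝ} {f p w : Ω →ₘ[μ] ℝ}

theorem IsPosDS.cesaro_fixed_add_coboundary_sub (hT : IsPosDS μ T) (hp : T p = p)
    (hp_mem : MemL1pLinf μ p) (hw : MemL1pLinf μ w) {n : ℕ} (hn : n ≠ 0) :
    cesaro μ T n (p + (w - T w)) - p = (n : ℝ)⁻¹ • (w - T^[n] w) := by
  rw [(hT.cesaro n).map_add _ _ hp_mem (hw.sub (hT.memL1pLinf_map hw)), cesaro_eq_self hp hn,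
    add_sub_cancel_left, hT.cesaro_sub_map hw]

theorem IsPosDS.tendsto_eLpNorm_top_cesaro_fixed_add_coboundary (hT : IsPosDS μ T) (hp : T p = p)
    (hp_mem : MemL1pLinf μ p) (hw : eLpNorm w ∞ μ ≠ ∞) :
    Tendsto (fun n ↦ eLpNorm ↑(cesaro μ T n (p + (w - T w)) - p) ∞ μ) atTop (𝓝 0) := by
  have hw_mem := memL1pLinf_of_eLpNorm_top_ne_top hw
  have hlim : Tendsto (fun n : ℕ ↦ ‖(n : ℝ)⁻¹‖ₑ * (2 * eLpNorm w ∞ μ)) atTop (𝓝 0) := by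
    have h := (tendsto_inv_atTop_nhds_zero_nat (𝕜 := ℝ)).enorm
    rw [enorm_zero] at h
    simpa using ENNReal.Tendsto.mul_const h (.inr (mul_ne_top ofNat_ne_top hw))
  refine tendsto_of_tendsto_of_tendsto_of_le_of_le' tendsto_const_nhds hlim
    (.of_forall fun _ ↦ zero_le) ?_
  filter_upwards [eventually_ne_atTop 0] with n hn
  rw [hT.cesaro_fixed_add_coboundary_sub hp hp_mem hw_mem hn, eLpNorm_coeFn_smul]
  gcongr
  calc eLpNorm ↑(w - T^[n] w) ∞ μ ≤ eLpNorm w ∞ μ + eLpNorm (T^[n] w) ∞ μ :=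
        (eLpNorm_congr_ae (AEEqFun.coeFn_sub _ _)).trans_le
          (eLpNorm_sub_le w.aestronglyMeasurable (T^[n] w).aestronglyMeasurable le_top)
    _ ≤ 2 * eLpNorm w ∞ μ := by
        rw [two_mul]
        gcongr
        exact (hT.iterate n).norm_top w hw_mem

theorem IsPosDS.auCauchySeq_cesaro (hT : IsPosDS μ T) (hf : MemRmu μ f) :
    AuCauchySeq μ fun n ↦ cesaro μ T n f := by
  refine auCauchySeq_of_forall_exists_measure_le fun δ hδ ε hε ↦ ?_
  obtain ⟨p, w, hp, hp_mem, hw, hexcess⟩ := hT.exists_excess_sub_fixed_add_coboundary_le hf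
    (half_pos hδ) (show 0 < δ * ε / 4 by positivity)
  set g := p + (w - T w)
  have hw_mem := memL1pLinf_of_eLpNorm_top_ne_top hw
  have hg : MemL1pLinf μ g := hp_mem.add (hw_mem.sub (hT.memL1pLinf_map hw_mem))
  refine ⟨fun n ↦ cesaro μ T n g, auCauchySeq_of_tendsto_eLpNorm_top
    (hT.tendsto_eLpNorm_top_cesaro_fixed_add_coboundary hp hp_mem hw), ?_⟩
  have hmeas : μ {ω | ∃ n, δ < |cesaro μ T n f ω - cesaro μ T n g ω|} =
      μ {ω | ∃ n, δ / 2 + δ / 2 < |cesaro μ T n (f - g) ω|} := by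
    refine measure_congr (eventuallyEq_set.2 ?_)
    filter_upwards [ae_all_iff.2 fun n ↦ AEEqFun.coeFn_sub (cesaro μ T n f) (cesaro μ T n g)]
      with ω hω
    simp only [add_halves, (hT.cesaro _).map_sub hf.1 hg, hω, Pi.sub_apply]
  refine (ENNReal.mul_le_mul_iff_right (ofReal_pos.2 (half_pos hδ)).ne' ofReal_ne_top).1 ?_
  calc ENNReal.ofReal (δ / 2) * μ {ω | ∃ n, δ < |cesaro μ T n f ω - cesaro μ T n g ω|}
      ≤ 2 * excess μ (δ / 2) (f - g) := hmeas ▸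
        hT.ofReal_mul_measure_exists_lt_abs_cesaro_le_excess (half_pos hδ) (half_pos hδ).le _
    _ ≤ ENNReal.ofReal 2 * ENNReal.ofReal (δ * ε / 4) := by
        rw [ofReal_ofNat]
        gcongr
    _ = ENNReal.ofReal (δ / 2) * ENNReal.ofReal ε := by
        rw [← ENNReal.ofReal_mul zero_le_two, ← ENNReal.ofReal_mul (half_pos hδ).le]
        ring_nf

theorem IsPosDS.memRmu_of_tendsto_cesaro (hT : IsPosDS μ T) (hf : MemRmu μ f) {g : Ω →ₘ[μ] ℝ}
    (hg : ∀ᵐ ω ∂μ, Tendsto (fun n ↦ cesaro μ T n f ω) atTop (𝓝 (g ω))) : MemRmu μ g := by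
  refine memRmu_iff_excess_lt_top.2 fun lam hlam ↦ ?_
  calc excess μ lam g ≤ liminf (fun n ↦ excess μ lam (cesaro μ T n f)) atTop :=
        excess_le_liminf hg
    _ ≤ liminf (fun _ ↦ excess μ lam f) atTop :=
        liminf_le_liminf (.of_forall fun n ↦ (hT.cesaro n).excess_map_le hlam.le f)
    _ = excess μ lam f := liminf_const _
    _ < ∞ := memRmu_iff_excess_lt_top.1 hf lam hlam

end Ergodic

theorem cesaro_auTendsto_of_memRmu_general (μ : Measure Ω)
    (T : (Ω →ₘ[μ] ℝ) → (Ω →ₘ[μ] ℝ)) (hT : IsPosDS μ T)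
    (f : Ω →ₘ[μ] ℝ) (hf : MemRmu μ f) :
    ∃ fhat : Ω →ₘ[μ] ℝ, MemRmu μ fhat ∧
      AuTendsto μ atTop (fun n => cesaro μ T n f) fhat := by
  obtain ⟨fhat, hlim, hau⟩ := (hT.auCauchySeq_cesaro hf).exists_tendsto_auTendsto
  exact ⟨fhat, hT.memRmu_of_tendsto_cesaro hf hlim, hau⟩

/-- **Commutative case of Theorem 4.4**: for a positive Dunford–Schwartz operator `T`
on a σ-finite measure space and `f ∈ R_μ`, the Cesàro averages
`A_n(f) = (1/n) ∑_{k=0}^{n-1} T^k f` converge almost uniformly to some `f̂ ∈ R_μ`. -/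
theorem cesaro_auTendsto_of_memRmu (μ : Measure Ω) [SigmaFinite μ]
    (T : (Ω →ₘ[μ] ℝ) → (Ω →ₘ[μ] ℝ)) (hT : IsPosDS μ T)
    (f : Ω →ₘ[μ] ℝ) (hf : MemRmu μ f) :
    ∃ fhat : Ω →ₘ[μ] ℝ, MemRmu μ fhat ∧
      AuTendsto μ atTop (fun n => cesaro μ T n f) fhat :=
  cesaro_auTendsto_of_memRmu_general μ T hT f hf
end
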